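/- arXiv:1705.10155 — 4 statements merged into one kernel-verified Lean document; each statement's English description precedes it below -/
import Mathlib

section
/- Let K : H → H be a bounded operator, F = {f_i}_{i∈I} a K-frame for H with lower bound A > 0 (i.e. A‖K*f‖² ≤ ∑_{i∈I}|⟨f,f_i⟩|² for all f ∈ H), and suppose c > 0 is a constant such that ‖f‖ ≤ c‖K*f‖ for all f in the range R(K) of K (such a c exists, namely c = ‖K†‖, when R(K) is closed). Then for every f ∈ R(K): ∑_{i∈I} |⟨f,f_i⟩|² ≤ (c²/A) · ‖∑_{i∈I} ⟨f,f_i⟩ f_i‖². -/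
/-!
Write `S = ∑ |⟨x, f_i⟩|²` and `T = ∑ ⟨x, f_i⟩ f_i`. Pairing `T` with `x` gives
`S = ⟨T, x⟩ ≤ ‖T‖ ‖x‖`, while the bound on the range of `K` and the lower frame bound give
`‖x‖² ≤ c² ‖K* x‖² ≤ (c² / A) S`. Hence `S² ≤ (c² / A) ‖T‖² S`, and `S` can be cancelled.
The series for `T` converges by the upper frame bound: `bessel_norm_sum_sq_le` bounds its
finite blocks by the corresponding blocks of the `ℓ²` series.
-/

/- STATEMENT 8: F a K-frame with lower bound A > 0, and c > 0 with ‖f‖ ≤ c‖K*f‖ for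
   all f ∈ R(K). Then for f ∈ R(K): ∑ |⟨f,f_i⟩|² ≤ (c²/A)·‖∑ ⟨f,f_i⟩f_i‖². -/

local notation "⟪" x ", " y "⟫" => @inner ℂ _ _ x y

/-- The synthesis operator of a Bessel family with bound `B` has squared norm at most `B`, stated
for finite sums of the family. -/
theorem bessel_norm_sum_sq_le
    {H : Type*} [NormedAddCommGroup H] [InnerProductSpace ℂ H] {I : Type*} (F : I → H) (B : ℝ)
    (hB : 0 ≤ B)
    (hFsum : ∀ x : H, Summable fun i => ‖⟪F i, x⟫‖ ^ 2)
    (hF_upper : ∀ x : H, ∑' i, ‖⟪F i, x⟫‖ ^ 2 ≤ B * ‖x‖ ^ 2)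
    (a : I → ℂ) (t : Finset I) :
    ‖∑ i ∈ t, a i • F i‖ ^ 2 ≤ B * ∑ i ∈ t, ‖a i‖ ^ 2 := by
  set y := ∑ i ∈ t, a i • F i with hy
  have h1 : ‖y‖ ^ 2 ≤ ∑ i ∈ t, ‖a i‖ * ‖⟪F i, y⟫‖ := by
    have h : ⟪y, y⟫ = ∑ i ∈ t, (starRingEnd ℂ) (a i) * ⟪F i, y⟫ := by
      conv_lhs => rw [hy, sum_inner]
      simp only [inner_smul_left, ← hy]
    have h' : ‖y‖ ^ 2 = ‖⟪y, y⟫‖ := by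
      rw [inner_self_eq_norm_sq_to_K]; simp
    rw [h', h]
    refine (norm_sum_le _ _).trans (le_of_eq ?_)
    simp
  have h2 := Finset.sum_mul_sq_le_sq_mul_sq t (fun i => ‖a i‖) (fun i => ‖⟪F i, y⟫‖)
  have h3 : ∑ i ∈ t, ‖⟪F i, y⟫‖ ^ 2 ≤ B * ‖y‖ ^ 2 :=
    ((hFsum y).sum_le_tsum t (fun i _ => by positivity)).trans (hF_upper y)
  have h4 : 0 ≤ ∑ i ∈ t, ‖a i‖ ^ 2 := by positivity
  have h5 : ‖y‖ ^ 2 * ‖y‖ ^ 2 ≤ (B * ∑ i ∈ t, ‖a i‖ ^ 2) * ‖y‖ ^ 2 := by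
    have := pow_le_pow_left₀ (by positivity) h1 2
    have := mul_le_mul_of_nonneg_left h3 h4
    nlinarith
  rcases (sq_nonneg ‖y‖).eq_or_lt with h0 | h0
  · rw [← h0]
    positivity
  · exact le_of_mul_le_mul_right h5 h0

theorem stmt_8
    {H : Type*} [NormedAddCommGroup H] [InnerProductSpace ℂ H] [CompleteSpace H]
    [TopologicalSpace.SeparableSpace H]
    {I : Type*} [Countable I]
    (K : H →L[ℂ] H) (F : I → H)
    -- F is a K-frame with lower bound A and upper bound B
    (A B : ℝ) (hA : 0 < A) (hB : 0 < B)
    (hFsum : ∀ x : H, Summable fun i => ‖⟪F i, x⟫‖ ^ 2)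
    (hF_lower : ∀ x : H,
      A * ‖ContinuousLinearMap.adjoint K x‖ ^ 2 ≤ ∑' i, ‖⟪F i, x⟫‖ ^ 2)
    (hF_upper : ∀ x : H, ∑' i, ‖⟪F i, x⟫‖ ^ 2 ≤ B * ‖x‖ ^ 2)
    -- c bounds ‖f‖ by c‖K*f‖ on the range of K
    (c : ℝ) (hc : 0 < c)
    (hrange : ∀ x ∈ Set.range K, ‖x‖ ≤ c * ‖ContinuousLinearMap.adjoint K x‖)
    (x : H) (hx : x ∈ Set.range K) :
    ∑' i, ‖⟪F i, x⟫‖ ^ 2 ≤ (c ^ 2 / A) * ‖∑' i, ⟪F i, x⟫ • F i‖ ^ 2 := by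
  have hsum : Summable fun i => ⟪F i, x⟫ • F i := by
    rw [summable_iff_vanishing_norm]
    intro ε hε
    obtain ⟨s, hs⟩ := summable_iff_vanishing_norm.1 (hFsum x) (ε ^ 2 / B) (by positivity)
    refine ⟨s, fun t ht => ?_⟩
    have h1 := bessel_norm_sum_sq_le F B hB.le hFsum hF_upper (fun i => ⟪F i, x⟫) t
    have h2 := (le_abs_self _).trans_lt (hs t ht)
    rw [lt_div_iff₀ hB] at h2
    exact lt_of_pow_lt_pow_left₀ 2 hε.le (by linarith)
  set T := ∑' i, ⟪F i, x⟫ • F i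
  set S := ∑' i, ‖⟪F i, x⟫‖ ^ 2
  have hS0 : 0 ≤ S := tsum_nonneg fun i => by positivity
  have hST : ⟪x, T⟫ = (S : ℂ) := by
    have h1 : HasSum (fun i => ⟪x, ⟪F i, x⟫ • F i⟫) ⟪x, T⟫ :=
      (innerSL ℂ x).hasSum hsum.hasSum
    have h2 : HasSum (fun i => ((‖⟪F i, x⟫‖ ^ 2 : ℝ) : ℂ)) (S : ℂ) :=
      Complex.hasSum_ofReal.2 (hFsum x).hasSum
    refine h1.unique (h2.congr_fun ?_)
    intro i
    rw [inner_smul_right, ← inner_conj_symm x (F i), Complex.mul_conj']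
    push_cast
    rfl
  have hle : S ≤ ‖x‖ * ‖T‖ := by
    have h := norm_inner_le_norm (𝕜 := ℂ) x T
    rwa [hST, Complex.norm_real, Real.norm_of_nonneg hS0] at h
  have hxS : ‖x‖ ^ 2 ≤ c ^ 2 / A * S := by
    have h1 := pow_le_pow_left₀ (norm_nonneg _) (hrange x hx) 2
    have h2 := hF_lower x
    rw [div_mul_eq_mul_div, le_div_iff₀ hA]
    have := mul_le_mul_of_nonneg_left h2 (sq_nonneg c)
    nlinarith
  rcases hS0.eq_or_lt with h0 | h0
  · rw [← h0]
    positivity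
  · refine le_of_mul_le_mul_right ?_ h0
    have h1 := pow_le_pow_left₀ hS0 hle 2
    have h2 := mul_le_mul_of_nonneg_right hxS (sq_nonneg ‖T‖)
    nlinarith
end

section
/- Let F = {f_i}_{i∈I} be a Parseval K-frame for H. Then for every J ⊆ I and every f ∈ H the following equality of complex numbers holds: ‖∑_{i∈J} ⟨f,f_i⟩ f_i‖² + conj(∑_{i∈J^c} ⟨f,f_i⟩ · conj(⟨KK*f,f_i⟩)) = ‖∑_{i∈J^c} ⟨f,f_i⟩ f_i‖² + ∑_{i∈J} ⟨f,f_i⟩ · conj(⟨KK*f,f_i⟩). -/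
/-!
Write `S_J x = ∑_{i ∈ J} ⟪F i, x⟫ F i`. The Bessel bound `∑ |⟪F i, x⟫|² = ‖K* x‖²` makes these series
converge unconditionally (`summable_frame_series`), and polarization of the Parseval identity gives
`S_J x + S_{Jᶜ} x = K K* x` (`tsum_frame_series`). Pairing with `y = K K* x` termwise turns the two
scalar series into `⟪y, S_J x⟫` and `⟪y, S_{Jᶜ} x⟫`, so with `a = S_J x`, `b = S_{Jᶜ} x` and
`y = a + b` the claim is `⟪a, a⟫ + ⟪b, a + b⟫ = ⟪b, b⟫ + ⟪a + b, a⟫`.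
-/


/- STATEMENT 10: For a Parseval K-frame F, J ⊆ I and f ∈ H (equality in ℂ):
   ‖∑_J ⟨f,f_i⟩f_i‖² + conj(∑_{J^c} ⟨f,f_i⟩·conj⟨KK*f,f_i⟩)
     = ‖∑_{J^c} ⟨f,f_i⟩f_i‖² + ∑_J ⟨f,f_i⟩·conj⟨KK*f,f_i⟩.
   Paper inner ⟨·,·⟩ is linear in the FIRST argument, so ⟨a, b⟩ = ⟪b, a⟫ (Mathlib). -/

open scoped ComplexConjugate

local notation "⟪" x ", " y "⟫" => @inner ℂ _ _ x y

/-- The norm of a finite partial synthesis is controlled by the `ℓ²` norm of its coefficients: expand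
`‖v‖² = ⟪v, v⟫` in one slot, then apply Cauchy-Schwarz and the Bessel bound at `v`. -/
theorem norm_sq_finset_sum_le
    {H : Type*} [NormedAddCommGroup H] [InnerProductSpace ℂ H] [CompleteSpace H]
    {I : Type*} (K : H →L[ℂ] H) (F : I → H)
    (hFsum : ∀ x : H, Summable fun i => ‖⟪F i, x⟫‖ ^ 2)
    (hPar : ∀ x : H, ∑' i, ‖⟪F i, x⟫‖ ^ 2 = ‖ContinuousLinearMap.adjoint K x‖ ^ 2)
    (c : I → ℂ) (s : Finset I) :
    ‖∑ i ∈ s, c i • F i‖ ^ 2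
      ≤ ‖ContinuousLinearMap.adjoint K‖ ^ 2 * ∑ i ∈ s, ‖c i‖ ^ 2 := by
  set v := ∑ i ∈ s, c i • F i with hv
  set M := ‖ContinuousLinearMap.adjoint K‖
  have h1 : ‖v‖ ^ 2 ≤ ∑ i ∈ s, ‖c i‖ * ‖⟪F i, v⟫‖ := by
    have h : ⟪v, v⟫ = ∑ i ∈ s, c i * ⟪v, F i⟫ := by
      conv_lhs => rw [inner_sum]
      simp [inner_smul_right]
    have h' : ‖⟪v, v⟫‖ = ‖v‖ ^ 2 := by
      rw [inner_self_eq_norm_sq_to_K]; simp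
    rw [← h', h]
    refine (norm_sum_le _ _).trans (Finset.sum_le_sum fun i _ => ?_)
    rw [norm_mul, norm_inner_symm]
  have h2 : ∑ i ∈ s, ‖⟪F i, v⟫‖ ^ 2 ≤ M ^ 2 * ‖v‖ ^ 2 := by
    calc _ ≤ ∑' i, ‖⟪F i, v⟫‖ ^ 2 :=
          (hFsum v).sum_le_tsum s fun i _ => by positivity
      _ = ‖ContinuousLinearMap.adjoint K v‖ ^ 2 := hPar v
      _ ≤ (M * ‖v‖) ^ 2 := by
          gcongr
          exact ContinuousLinearMap.le_opNorm _ _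
      _ = _ := by ring
  have h3 := Finset.sum_mul_sq_le_sq_mul_sq s (fun i => ‖c i‖) (fun i => ‖⟪F i, v⟫‖)
  have hc : 0 ≤ ∑ i ∈ s, ‖c i‖ ^ 2 := by positivity
  have h4 : (‖v‖ ^ 2) ^ 2 ≤ (∑ i ∈ s, ‖c i‖ ^ 2) * (M ^ 2 * ‖v‖ ^ 2) :=
    (pow_le_pow_left₀ (by positivity) h1 2).trans (h3.trans (by gcongr))
  rcases eq_or_ne (‖v‖ ^ 2) 0 with h0 | h0
  · rw [h0]; positivity
  · have hp : 0 < ‖v‖ ^ 2 := lt_of_le_of_ne (by positivity) h0.symm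
    refine le_of_mul_le_mul_right ?_ hp
    linarith

theorem summable_frame_series
    {H : Type*} [NormedAddCommGroup H] [InnerProductSpace ℂ H] [CompleteSpace H]
    {I : Type*} (K : H →L[ℂ] H) (F : I → H)
    (hFsum : ∀ x : H, Summable fun i => ‖⟪F i, x⟫‖ ^ 2)
    (hPar : ∀ x : H, ∑' i, ‖⟪F i, x⟫‖ ^ 2 = ‖ContinuousLinearMap.adjoint K x‖ ^ 2)
    (x : H) : Summable fun i => ⟪F i, x⟫ • F i := by
  rw [summable_iff_vanishing_norm]
  intro ε hε
  set M := ‖ContinuousLinearMap.adjoint K‖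
  have hM : 0 < M ^ 2 + 1 := by positivity
  obtain ⟨s, hs⟩ := summable_iff_vanishing_norm.1 (hFsum x) (ε ^ 2 / (M ^ 2 + 1)) (by positivity)
  refine ⟨s, fun t ht => ?_⟩
  have h1 := norm_sq_finset_sum_le K F hFsum hPar (fun i => ⟪F i, x⟫) t
  have h2 := (le_abs_self _).trans_lt (hs t ht)
  rw [lt_div_iff₀ hM] at h2
  have h0 : 0 ≤ ∑ i ∈ t, ‖⟪F i, x⟫‖ ^ 2 := by positivity
  refine lt_of_pow_lt_pow_left₀ 2 hε.le (h1.trans_lt ?_)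
  nlinarith

/-- The frame operator is `K K*`: both are linear with the same quadratic form `x ↦ ‖K* x‖²`, which
determines a linear map on a complex inner product space. -/
theorem tsum_frame_series
    {H : Type*} [NormedAddCommGroup H] [InnerProductSpace ℂ H] [CompleteSpace H]
    {I : Type*} (K : H →L[ℂ] H) (F : I → H)
    (hFsum : ∀ x : H, Summable fun i => ‖⟪F i, x⟫‖ ^ 2)
    (hPar : ∀ x : H, ∑' i, ‖⟪F i, x⟫‖ ^ 2 = ‖ContinuousLinearMap.adjoint K x‖ ^ 2)
    (x : H) : ∑' i, ⟪F i, x⟫ • F i = K (ContinuousLinearMap.adjoint K x) := by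
  have hS := summable_frame_series K F hFsum hPar
  let T : H →ₗ[ℂ] H :=
    { toFun := fun x => ∑' i, ⟪F i, x⟫ • F i
      map_add' := fun x y => by
        simp only [inner_add_right, add_smul]
        exact (hS x).tsum_add (hS y)
      map_smul' := fun c x => by
        simp only [inner_smul_right, mul_smul, RingHom.id_apply]
        exact (hS x).tsum_const_smul c }
  have hT : T = (K ∘L ContinuousLinearMap.adjoint K : H →L[ℂ] H).toLinearMap := by
    rw [← ext_inner_map]
    intro z
    have hl : ⟪z, T z⟫ = ((‖ContinuousLinearMap.adjoint K z‖ ^ 2 : ℝ) : ℂ) := by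
      change ⟪z, ∑' i, ⟪F i, z⟫ • F i⟫ = _
      rw [← hPar z, ← innerSL_apply_apply ℂ, (innerSL ℂ z).map_tsum (hS z), Complex.ofReal_tsum]
      refine tsum_congr fun i => ?_
      rw [innerSL_apply_apply, inner_smul_right, ← inner_conj_symm z (F i), RCLike.mul_conj]
      simp
    have hr : ⟪z, K (ContinuousLinearMap.adjoint K z)⟫
        = ((‖ContinuousLinearMap.adjoint K z‖ ^ 2 : ℝ) : ℂ) := by
      rw [← ContinuousLinearMap.adjoint_inner_left, inner_self_eq_norm_sq_to_K]
      simp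
    rw [← inner_conj_symm, hl, ← hr, inner_conj_symm]
    rfl
  exact congrArg (fun L : H →ₗ[ℂ] H => L x) hT

theorem stmt_10
    {H : Type*} [NormedAddCommGroup H] [InnerProductSpace ℂ H] [CompleteSpace H]
    [TopologicalSpace.SeparableSpace H]
    {I : Type*} [Countable I]
    (K : H →L[ℂ] H) (F : I → H)
    -- F is a Parseval K-frame
    (hFsum : ∀ x : H, Summable fun i => ‖⟪F i, x⟫‖ ^ 2)
    (hPar : ∀ x : H, ∑' i, ‖⟪F i, x⟫‖ ^ 2 = ‖ContinuousLinearMap.adjoint K x‖ ^ 2)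
    (J : Set I) (x : H) :
    (‖∑' i : J, ⟪F i, x⟫ • F i‖ : ℂ) ^ 2
        + conj (∑' i : ↥Jᶜ,
            ⟪F i, x⟫ * conj ⟪F i, K (ContinuousLinearMap.adjoint K x)⟫)
      = (‖∑' i : ↥Jᶜ, ⟪F i, x⟫ • F i‖ : ℂ) ^ 2
        + ∑' i : J, ⟪F i, x⟫ * conj ⟪F i, K (ContinuousLinearMap.adjoint K x)⟫ := by
  have hS := summable_frame_series K F hFsum hPar x
  set y := K (ContinuousLinearMap.adjoint K x) with hy
  have hpair : ∀ A : Set I, ∑' i : A, ⟪F i, x⟫ * conj ⟪F i, y⟫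
      = ⟪y, ∑' i : A, ⟪F i, x⟫ • F i⟫ := by
    intro A
    have hA : Summable fun i : A => ⟪F i, x⟫ • F i := hS.subtype A
    rw [← innerSL_apply_apply ℂ, (innerSL ℂ y).map_tsum hA]
    refine tsum_congr fun i => ?_
    rw [innerSL_apply_apply, inner_smul_right, inner_conj_symm]
  rw [hpair J, hpair Jᶜ, inner_conj_symm]
  have hsum : (∑' i : J, ⟪F i, x⟫ • F i) + ∑' i : ↥Jᶜ, ⟪F i, x⟫ • F i = y := by
    rw [hy, ← tsum_frame_series K F hFsum hPar x]
    exact (hS.subtype J).tsum_add_tsum_compl (hS.subtype Jᶜ)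
  set a := ∑' i : J, ⟪F i, x⟫ • F i
  set b := ∑' i : ↥Jᶜ, ⟪F i, x⟫ • F i
  have ha : (‖a‖ : ℂ) ^ 2 = ⟪a, a⟫ := (inner_self_eq_norm_sq_to_K a).symm
  have hb : (‖b‖ : ℂ) ^ 2 = ⟪b, b⟫ := (inner_self_eq_norm_sq_to_K b).symm
  rw [ha, hb, ← hsum, inner_add_left, inner_add_right]
  ring
end

section
/- Let F = {f_i}_{i∈I} be a Parseval K-frame for H, J ⊆ I and f ∈ H. Then the following three conditions are equivalent: (a) Re(∑_{i∈J^c} conj(⟨f,f_i⟩) · ⟨KK*f,f_i⟩) + ‖∑_{i∈J} ⟨f,f_i⟩ f_i‖² = ‖KK*f‖²; (b) ‖∑_{i∈J} ⟨f,f_i⟩ f_i‖² = Re(∑_{i∈J} ⟨f,f_i⟩ · conj(⟨KK*f,f_i⟩)); (c) ‖∑_{i∈J^c} ⟨f,f_i⟩ f_i‖² = Re(∑_{i∈J^c} ⟨f,f_i⟩ · conj(⟨KK*f,f_i⟩)). -/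
/-!
Write `y = K K* x`, `S_J = ∑_{i ∈ J} ⟪F i, x⟫ F i`. The Parseval condition is a Bessel bound, so these
series converge unconditionally (`summable_frame_smul`), and polarization of the Parseval identity
gives `S_J + S_{Jᶜ} = y` (`tsum_frame_smul`). The scalar series are `⟪y, S_J⟫`, `⟪y, S_{Jᶜ}⟫` and the
conjugate of the latter. Since `Re ⟪y, S_{Jᶜ}⟫ = ‖y‖² - Re ⟪y, S_J⟫`, each of the three conditions is
`‖S_J‖² = Re ⟪y, S_J⟫`; for (c) expand `‖y - S_J‖²`.
-/

/- STATEMENT 11: For a Parseval K-frame F, J ⊆ I and f ∈ H, the following are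
   equivalent:
   (a) Re(∑_{J^c} conj⟨f,f_i⟩·⟨KK*f,f_i⟩) + ‖∑_J ⟨f,f_i⟩f_i‖² = ‖KK*f‖²;
   (b) ‖∑_J ⟨f,f_i⟩f_i‖² = Re(∑_J ⟨f,f_i⟩·conj⟨KK*f,f_i⟩);
   (c) ‖∑_{J^c} ⟨f,f_i⟩f_i‖² = Re(∑_{J^c} ⟨f,f_i⟩·conj⟨KK*f,f_i⟩).
   Paper inner ⟨·,·⟩ is linear in the FIRST argument, so ⟨a, b⟩ = ⟪b, a⟫ (Mathlib). -/

open scoped ComplexConjugate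

local notation "⟪" x ", " y "⟫" => @inner ℂ _ _ x y

section Frame

variable {H : Type*} [NormedAddCommGroup H] [InnerProductSpace ℂ H] {I : Type*} {F : I → H}

/-- Finite form of the boundedness of the synthesis operator of a Bessel family. -/
lemma norm_sum_smul_sq_le {B : ℝ} (hB0 : 0 ≤ B) (hB : ∀ (s : Finset I) (v : H),
    ∑ i ∈ s, ‖⟪F i, v⟫‖ ^ 2 ≤ B * ‖v‖ ^ 2) (c : I → ℂ) (s : Finset I) :
    ‖∑ i ∈ s, c i • F i‖ ^ 2 ≤ B * ∑ i ∈ s, ‖c i‖ ^ 2 := by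
  set v := ∑ i ∈ s, c i • F i with hv
  have h1 : ‖v‖ ^ 2 ≤ ∑ i ∈ s, ‖c i‖ * ‖⟪F i, v⟫‖ := by
    have h : ⟪v, v⟫ = ∑ i ∈ s, c i * ⟪v, F i⟫ := by
      conv_lhs => rw [hv, inner_sum, ← hv]
      simp [inner_smul_right]
    calc ‖v‖ ^ 2 = ‖⟪v, v⟫‖ := by rw [inner_self_eq_norm_sq_to_K]; simp
      _ ≤ ∑ i ∈ s, ‖c i * ⟪v, F i⟫‖ := by rw [h]; exact norm_sum_le _ _
      _ = _ := by simp only [norm_mul, norm_inner_symm v]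
  have h2 : (‖v‖ ^ 2) ^ 2 ≤ (∑ i ∈ s, ‖c i‖ ^ 2) * (B * ‖v‖ ^ 2) :=
    calc (‖v‖ ^ 2) ^ 2 ≤ (∑ i ∈ s, ‖c i‖ * ‖⟪F i, v⟫‖) ^ 2 := by gcongr
      _ ≤ (∑ i ∈ s, ‖c i‖ ^ 2) * ∑ i ∈ s, ‖⟪F i, v⟫‖ ^ 2 := Finset.sum_mul_sq_le_sq_mul_sq _ _ _
      _ ≤ _ := by
        gcongr
        exact hB s v
  rcases eq_or_ne v 0 with h0 | h0
  · have : 0 ≤ ∑ i ∈ s, ‖c i‖ ^ 2 := Finset.sum_nonneg fun _ _ => by positivity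
    simpa [h0] using mul_nonneg hB0 this
  · have : 0 < ‖v‖ ^ 2 := by positivity
    nlinarith

variable [CompleteSpace H]

lemma summable_frame_smul {K : H →L[ℂ] H}
    (hFsum : ∀ x : H, Summable fun i => ‖⟪F i, x⟫‖ ^ 2)
    (hPar : ∀ x : H, ∑' i, ‖⟪F i, x⟫‖ ^ 2 = ‖ContinuousLinearMap.adjoint K x‖ ^ 2) (x : H) :
    Summable fun i => ⟪F i, x⟫ • F i := by
  set B : ℝ := ‖ContinuousLinearMap.adjoint K‖ ^ 2
  have hB : ∀ (s : Finset I) (v : H), ∑ i ∈ s, ‖⟪F i, v⟫‖ ^ 2 ≤ B * ‖v‖ ^ 2 := fun s v =>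
    calc ∑ i ∈ s, ‖⟪F i, v⟫‖ ^ 2 ≤ ∑' i, ‖⟪F i, v⟫‖ ^ 2 :=
          (hFsum v).sum_le_tsum s fun _ _ => by positivity
      _ = ‖ContinuousLinearMap.adjoint K v‖ ^ 2 := hPar v
      _ ≤ (‖ContinuousLinearMap.adjoint K‖ * ‖v‖) ^ 2 := by
          gcongr
          exact ContinuousLinearMap.le_opNorm _ _
      _ = _ := mul_pow _ _ _
  rw [summable_iff_vanishing_norm]
  intro ε hε
  obtain ⟨s, hs⟩ := summable_iff_vanishing_norm.1 (hFsum x) (ε ^ 2 / (B + 1)) (by positivity)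
  refine ⟨s, fun t ht => ?_⟩
  have h1 := (le_abs_self _).trans_lt (hs t ht)
  rw [lt_div_iff₀ (by positivity)] at h1
  have h2 := norm_sum_smul_sq_le (by positivity) hB (fun i => ⟪F i, x⟫) t
  have h3 : 0 ≤ ∑ i ∈ t, ‖⟪F i, x⟫‖ ^ 2 := Finset.sum_nonneg fun _ _ => by positivity
  exact lt_of_pow_lt_pow_left₀ 2 hε.le (by nlinarith)

/-- The frame operator of a Parseval `K`-frame is `K K*`: both have the same quadratic form, and
over `ℂ` the quadratic form determines the operator. -/
lemma tsum_frame_smul {K : H →L[ℂ] H}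
    (hFsum : ∀ x : H, Summable fun i => ‖⟪F i, x⟫‖ ^ 2)
    (hPar : ∀ x : H, ∑' i, ‖⟪F i, x⟫‖ ^ 2 = ‖ContinuousLinearMap.adjoint K x‖ ^ 2) (x : H) :
    ∑' i, ⟪F i, x⟫ • F i = K (ContinuousLinearMap.adjoint K x) := by
  have hs := summable_frame_smul hFsum hPar
  let S : H →ₗ[ℂ] H :=
    { toFun := fun x => ∑' i, ⟪F i, x⟫ • F i
      map_add' := fun x y => by
        simp only [inner_add_right, add_smul]
        exact (hs x).tsum_add (hs y)
      map_smul' := fun c x => by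
        simp only [inner_smul_right, mul_smul, RingHom.id_apply]
        exact (hs x).tsum_const_smul c }
  let T : H →ₗ[ℂ] H := (K ∘L ContinuousLinearMap.adjoint K : H →L[ℂ] H)
  have hST : S = T := by
    rw [← ext_inner_map]
    intro v
    rw [← inner_conj_symm (S v), ← inner_conj_symm (T v)]
    congr 1
    have hS : ⟪v, S v⟫ = ∑' i, ⟪v, ⟪F i, v⟫ • F i⟫ := (innerSL ℂ v).map_tsum (hs v)
    have hT : ⟪v, T v⟫ = ((‖ContinuousLinearMap.adjoint K v‖ ^ 2 : ℝ) : ℂ) := by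
      change ⟪v, K (ContinuousLinearMap.adjoint K v)⟫ = _
      rw [← ContinuousLinearMap.adjoint_inner_left, inner_self_eq_norm_sq_to_K]
      simp
    rw [hS, hT, ← hPar, Complex.ofReal_tsum]
    refine tsum_congr fun i => ?_
    rw [inner_smul_right, ← inner_conj_symm v, Complex.mul_conj, Complex.normSq_eq_norm_sq]
  exact LinearMap.congr_fun hST x

end Frame

theorem stmt_11
    {H : Type*} [NormedAddCommGroup H] [InnerProductSpace ℂ H] [CompleteSpace H]
    [TopologicalSpace.SeparableSpace H]
    {I : Type*} [Countable I]
    (K : H →L[ℂ] H) (F : I → H)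
    -- F is a Parseval K-frame
    (hFsum : ∀ x : H, Summable fun i => ‖⟪F i, x⟫‖ ^ 2)
    (hPar : ∀ x : H, ∑' i, ‖⟪F i, x⟫‖ ^ 2 = ‖ContinuousLinearMap.adjoint K x‖ ^ 2)
    (J : Set I) (x : H) :
    ((∑' i : ↥Jᶜ, conj ⟪F i, x⟫ * ⟪F i, K (ContinuousLinearMap.adjoint K x)⟫).re
          + ‖∑' i : J, ⟪F i, x⟫ • F i‖ ^ 2
        = ‖K (ContinuousLinearMap.adjoint K x)‖ ^ 2
      ↔ ‖∑' i : J, ⟪F i, x⟫ • F i‖ ^ 2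
        = (∑' i : J,
            ⟪F i, x⟫ * conj ⟪F i, K (ContinuousLinearMap.adjoint K x)⟫).re) ∧
    (‖∑' i : J, ⟪F i, x⟫ • F i‖ ^ 2
        = (∑' i : J,
            ⟪F i, x⟫ * conj ⟪F i, K (ContinuousLinearMap.adjoint K x)⟫).re
      ↔ ‖∑' i : ↥Jᶜ, ⟪F i, x⟫ • F i‖ ^ 2
        = (∑' i : ↥Jᶜ,
            ⟪F i, x⟫ * conj ⟪F i, K (ContinuousLinearMap.adjoint K x)⟫).re) := by
  have hs := summable_frame_smul hFsum hPar x
  have hJ : Summable fun i : J => ⟪F i, x⟫ • F i := hs.subtype J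
  have hJc : Summable fun i : ↥Jᶜ => ⟪F i, x⟫ • F i := hs.subtype Jᶜ
  have hsum : (∑' i : J, ⟪F i, x⟫ • F i) + ∑' i : ↥Jᶜ, ⟪F i, x⟫ • F i
      = K (ContinuousLinearMap.adjoint K x) := by
    rw [← tsum_frame_smul hFsum hPar x]
    exact hJ.tsum_add_tsum_compl (f := fun i => ⟪F i, x⟫ • F i) (s := J) hJc
  set y := K (ContinuousLinearMap.adjoint K x)
  have e1 : ∑' i : J, ⟪F i, x⟫ * conj ⟪F i, y⟫ = ⟪y, ∑' i : J, ⟪F i, x⟫ • F i⟫ := by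
    refine Eq.trans ?_ ((innerSL ℂ y).map_tsum hJ).symm
    simp
  have e2 : ∑' i : ↥Jᶜ, ⟪F i, x⟫ * conj ⟪F i, y⟫ = ⟪y, ∑' i : ↥Jᶜ, ⟪F i, x⟫ • F i⟫ := by
    refine Eq.trans ?_ ((innerSL ℂ y).map_tsum hJc).symm
    simp
  have e3 : (∑' i : ↥Jᶜ, conj ⟪F i, x⟫ * ⟪F i, y⟫).re
      = (⟪y, ∑' i : ↥Jᶜ, ⟪F i, x⟫ • F i⟫).re := by
    rw [← e2, ← Complex.conj_re, Complex.conj_tsum]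
    simp
  rw [e1, e2, e3]
  set a := ∑' i : J, ⟪F i, x⟫ • F i
  set b := ∑' i : ↥Jᶜ, ⟪F i, x⟫ • F i
  have hb : b = y - a := by rw [← hsum]; abel
  have hyy : (⟪y, y⟫).re = ‖y‖ ^ 2 := inner_self_eq_norm_sq (𝕜 := ℂ) y
  have hyb : (⟪y, b⟫).re = ‖y‖ ^ 2 - (⟪y, a⟫).re := by
    rw [hb, inner_sub_right, Complex.sub_re, hyy]
  have hbb : ‖b‖ ^ 2 = ‖y‖ ^ 2 - 2 * (⟪y, a⟫).re + ‖a‖ ^ 2 := by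
    rw [hb]
    exact norm_sub_sq (𝕜 := ℂ) y a
  rw [hyb, hbb]
  constructor <;> constructor <;> intro h <;> linarith
end

section
/- Let F = {f_i}_{i∈I} be a Parseval K-frame for H, J ⊆ I and f ∈ H, and write S_J f = ∑_{i∈J}⟨f,f_i⟩f_i and S_{J^c} f = ∑_{i∈J^c}⟨f,f_i⟩f_i. Then the following four conditions are equivalent: (i) ‖S_J f‖² = ∑_{i∈J} ⟨f,f_i⟩ · conj(⟨KK*f,f_i⟩); (ii) ‖S_{J^c} f‖² = ∑_{i∈J^c} ⟨f,f_i⟩ · conj(⟨KK*f,f_i⟩); (iii) ⟨S_{J^c} f, S_J f⟩ = 0; (iv) ⟨f, S_{J^c} S_J f⟩ = 0. -/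
/-!
The Bessel property makes the series for `S_J` and `S_{J^c}` converge, so that
`⟪y, S_J x⟫ = ∑_{i ∈ J} ⟪F i, x⟫ conj ⟪F i, y⟫`. Adding the two quadratic forms, the Parseval
identity gives `⟪(S_J + S_{J^c}) x, x⟫ = ‖K* x‖² = ⟪K K* x, x⟫`, and hence `S_J + S_{J^c} = K K*` by
complex polarization. The right-hand side of (i) is therefore
`⟪K K* x, S_J x⟫ = ‖S_J x‖² + ⟪S_{J^c} x, S_J x⟫`, so (i) says exactly that the cross term vanishes;
(ii) is the same with `J` and `J^c` exchanged. Condition (iv) is (iii) with the symmetric operator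
`S_{J^c}` moved to the other argument.
-/

open scoped ComplexConjugate

local notation "⟪" x ", " y "⟫" => @inner ℂ _ _ x y

/-- Synthesis bound of a Bessel family: the dual form of the Bessel inequality. -/
lemma norm_sq_sum_smul_le {H ι : Type*} [NormedAddCommGroup H] [InnerProductSpace ℂ H]
    (G : ι → H) {B : ℝ} (hB0 : 0 ≤ B) (s : Finset ι)
    (hB : ∀ y : H, ∑ i ∈ s, ‖⟪G i, y⟫‖ ^ 2 ≤ B * ‖y‖ ^ 2) (c : ι → ℂ) :
    ‖∑ i ∈ s, c i • G i‖ ^ 2 ≤ B * ∑ i ∈ s, ‖c i‖ ^ 2 := by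
  set v := ∑ i ∈ s, c i • G i with hv
  have h1 : ‖v‖ ^ 2 ≤ ∑ i ∈ s, ‖c i‖ * ‖⟪G i, v⟫‖ := by
    have h : ‖⟪v, v⟫‖ = ‖v‖ ^ 2 := by
      rw [inner_self_eq_norm_sq_to_K]; simp
    rw [← h]
    nth_rewrite 1 [hv]
    rw [sum_inner]
    refine (norm_sum_le _ _).trans (le_of_eq ?_)
    refine Finset.sum_congr rfl fun i _ => ?_
    rw [inner_smul_left, norm_mul, RCLike.norm_conj]
  have h2 := Finset.sum_mul_sq_le_sq_mul_sq s (fun i => ‖c i‖) (fun i => ‖⟪G i, v⟫‖)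
  have h3 : (‖v‖ ^ 2) ^ 2 ≤ (∑ i ∈ s, ‖c i‖ ^ 2) * (B * ‖v‖ ^ 2) :=
    (pow_le_pow_left₀ (by positivity) h1 2).trans (h2.trans
      (mul_le_mul_of_nonneg_left (hB v) (by positivity)))
  rcases (sq_nonneg ‖v‖).eq_or_lt with h0 | h0
  · rw [← h0]
    positivity
  · nlinarith

lemma summable_smul_of_bessel {H ι : Type*} [NormedAddCommGroup H] [InnerProductSpace ℂ H]
    [CompleteSpace H] (G : ι → H) {B : ℝ} (hB0 : 0 ≤ B)
    (hB : ∀ (s : Finset ι) (y : H), ∑ i ∈ s, ‖⟪G i, y⟫‖ ^ 2 ≤ B * ‖y‖ ^ 2)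
    (c : ι → ℂ) (hc : Summable fun i => ‖c i‖ ^ 2) :
    Summable fun i => c i • G i := by
  rw [summable_iff_vanishing_norm]
  intro ε hε
  obtain ⟨s, hs⟩ := summable_iff_vanishing_norm.mp hc (ε ^ 2 / (B + 1)) (by positivity)
  refine ⟨s, fun t ht => ?_⟩
  have h1 := norm_sq_sum_smul_le G hB0 t (hB t) c
  have h2 := (le_abs_self _).trans_lt (hs t ht)
  rw [lt_div_iff₀ (by positivity)] at h2
  have h3 : 0 ≤ ∑ i ∈ t, ‖c i‖ ^ 2 := by positivity
  refine lt_of_pow_lt_pow_left₀ 2 hε.le ?_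
  nlinarith

/-- The sesquilinear form of a partial frame operator, together with its convergence. -/
lemma hasSum_inner_frameOp {H I : Type*} [NormedAddCommGroup H] [InnerProductSpace ℂ H]
    [CompleteSpace H] (K : H →L[ℂ] H) (F : I → H)
    (hFsum : ∀ x : H, Summable fun i => ‖⟪F i, x⟫‖ ^ 2)
    (hPar : ∀ x : H, ∑' i, ‖⟪F i, x⟫‖ ^ 2 = ‖ContinuousLinearMap.adjoint K x‖ ^ 2)
    (J : Set I) (T : H →L[ℂ] H) (hT : ∀ x : H, T x = ∑' i : J, ⟪F i, x⟫ • F i) (x y : H) :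
    HasSum (fun i : J => ⟪F i, x⟫ * conj ⟪F i, y⟫) ⟪y, T x⟫ := by
  have hs : Summable fun i : J => ⟪F i, x⟫ • F i := by
    refine summable_smul_of_bessel (fun i : J => F i)
      (B := ‖ContinuousLinearMap.adjoint K‖ ^ 2) (by positivity) (fun s y => ?_) _
      ((hFsum x).subtype J)
    calc ∑ i ∈ s, ‖⟪F i, y⟫‖ ^ 2
        ≤ ∑' i : J, ‖⟪F i, y⟫‖ ^ 2 :=
          ((hFsum y).subtype J).sum_le_tsum s fun i _ => by positivity
      _ ≤ ∑' i, ‖⟪F i, y⟫‖ ^ 2 :=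
          (hFsum y).tsum_subtype_le _ J fun i => by positivity
      _ ≤ _ := by
          rw [hPar, ← mul_pow]
          exact pow_le_pow_left₀ (norm_nonneg _) (ContinuousLinearMap.le_opNorm _ _) 2
  have h := hs.hasSum.mapL (innerSL ℂ y)
  rw [← hT] at h
  simpa [inner_smul_right] using h

/-- The partial frame operators over `J` and its complement add up to `K K*`. -/
lemma frameOp_add_compl {H I : Type*} [NormedAddCommGroup H] [InnerProductSpace ℂ H]
    [CompleteSpace H] (K : H →L[ℂ] H) (F : I → H)
    (hFsum : ∀ x : H, Summable fun i => ‖⟪F i, x⟫‖ ^ 2)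
    (hPar : ∀ x : H, ∑' i, ‖⟪F i, x⟫‖ ^ 2 = ‖ContinuousLinearMap.adjoint K x‖ ^ 2)
    (J : Set I) (SJ SJc : H →L[ℂ] H)
    (hSJ : ∀ x : H, SJ x = ∑' i : J, ⟪F i, x⟫ • F i)
    (hSJc : ∀ x : H, SJc x = ∑' i : ↥Jᶜ, ⟪F i, x⟫ • F i) (x : H) :
    K (ContinuousLinearMap.adjoint K x) = SJ x + SJc x := by
  have key : ∀ y : H, ⟪y, SJ y + SJc y⟫ = ⟪y, K (ContinuousLinearMap.adjoint K y)⟫ := by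
    intro y
    have h1 := (hasSum_inner_frameOp K F hFsum hPar J SJ hSJ y y).add_compl
      (f := fun i => ⟪F i, y⟫ * conj ⟪F i, y⟫)
      (hasSum_inner_frameOp K F hFsum hPar Jᶜ SJc hSJc y y)
    have h2 := (hFsum y).hasSum
    rw [hPar] at h2
    have h3 := h2.mapL Complex.ofRealCLM
    rw [inner_add_right, ← ContinuousLinearMap.adjoint_inner_left K, inner_self_eq_norm_sq_to_K]
    refine h1.unique ?_
    simp only [Complex.mul_conj']
    simpa using h3
  have h := (ext_inner_map
    (K.comp (ContinuousLinearMap.adjoint K)).toLinearMap (SJ + SJc).toLinearMap).mp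
    (fun y => by
      have h := congrArg conj (key y).symm
      rwa [inner_conj_symm, inner_conj_symm] at h)
  exact LinearMap.congr_fun h x

theorem stmt_12
    {H : Type*} [NormedAddCommGroup H] [InnerProductSpace ℂ H] [CompleteSpace H]
    [TopologicalSpace.SeparableSpace H]
    {I : Type*} [Countable I]
    (K : H →L[ℂ] H) (F : I → H)
    -- F is a Parseval K-frame
    (hFsum : ∀ x : H, Summable fun i => ‖⟪F i, x⟫‖ ^ 2)
    (hPar : ∀ x : H, ∑' i, ‖⟪F i, x⟫‖ ^ 2 = ‖ContinuousLinearMap.adjoint K x‖ ^ 2)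
    (J : Set I)
    (SJ SJc : H →L[ℂ] H)
    (hSJ : ∀ x : H, SJ x = ∑' i : J, ⟪F i, x⟫ • F i)
    (hSJc : ∀ x : H, SJc x = ∑' i : ↥Jᶜ, ⟪F i, x⟫ • F i)
    (x : H) :
    ((‖SJ x‖ : ℂ) ^ 2
        = ∑' i : J, ⟪F i, x⟫ * conj ⟪F i, K (ContinuousLinearMap.adjoint K x)⟫
      ↔ (‖SJc x‖ : ℂ) ^ 2
        = ∑' i : ↥Jᶜ,
            ⟪F i, x⟫ * conj ⟪F i, K (ContinuousLinearMap.adjoint K x)⟫) ∧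
    ((‖SJc x‖ : ℂ) ^ 2
        = ∑' i : ↥Jᶜ,
            ⟪F i, x⟫ * conj ⟪F i, K (ContinuousLinearMap.adjoint K x)⟫
      ↔ ⟪SJ x, SJc x⟫ = 0) ∧
    (⟪SJ x, SJc x⟫ = 0 ↔ ⟪SJc (SJ x), x⟫ = 0) := by
  have hA := hasSum_inner_frameOp K F hFsum hPar J SJ hSJ
  have hB := hasSum_inner_frameOp K F hFsum hPar Jᶜ SJc hSJc
  have hK := frameOp_add_compl K F hFsum hPar J SJ SJc hSJ hSJc x
  rw [(hA x _).tsum_eq, (hB x _).tsum_eq, hK, inner_add_left, inner_add_left,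
    inner_self_eq_norm_sq_to_K, inner_self_eq_norm_sq_to_K]
  have hsymm : ⟪SJc (SJ x), x⟫ = ⟪SJ x, SJc x⟫ := by
    rw [← inner_conj_symm, ← (hB (SJ x) x).tsum_eq, ← (hB x (SJ x)).tsum_eq, Complex.conj_tsum]
    simp [mul_comm]
  have h1 : ((‖SJ x‖ : ℂ) ^ 2 = (‖SJ x‖ : ℂ) ^ 2 + ⟪SJc x, SJ x⟫) ↔ ⟪SJ x, SJc x⟫ = 0 := by
    rw [left_eq_add, inner_eq_zero_symm]
  have h2 : ((‖SJc x‖ : ℂ) ^ 2 = ⟪SJ x, SJc x⟫ + (‖SJc x‖ : ℂ) ^ 2) ↔ ⟪SJ x, SJc x⟫ = 0 :=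
    right_eq_add
  exact ⟨h1.trans h2.symm, h2, by rw [hsymm]⟩
end
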